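/- For every natural number k there exists a connected simple graph G such that every valid doubling-coloring (D, c) of G satisfies |D| ≥ k; that is, D_lir is not bounded above by any constant over connected graphs. -/

import Mathlib

open Finset
open scoped Classical

/-- The weighted degree of vertex `v` in color `i`: each edge incident to `v` colored `i`
counts 2 if it is doubled (lies in `D`) and 1 otherwise. -/
noncomputable def wdeg {V : Type*} [Fintype V] (G : SimpleGraph V)
    (D : Finset (Sym2 V)) (c : Sym2 V → Fin 2) (i : Fin 2) (v : V) : ℕ :=
  ∑ w ∈ Finset.univ.filter (fun w => G.Adj v w ∧ c s(v, w) = i),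
    (if s(v, w) ∈ D then 2 else 1)

/-- `(D, c)` is a valid doubling-coloring of `G`. -/
def ValidDC {V : Type*} [Fintype V] (G : SimpleGraph V)
    (D : Finset (Sym2 V)) (c : Sym2 V → Fin 2) : Prop :=
  ↑D ⊆ G.edgeSet ∧
    ∀ u v, G.Adj u v →
      wdeg G D c (c s(u, v)) u ≠ wdeg G D c (c s(u, v)) v

/-!
Hang `k` disjoint copies of a fixed gadget from a common hub. In the gadget, a root of degree 4 lies
on a triangle with two vertices of degree 2 and is adjacent to a fork of degree 3, whose other two
neighbors start paths of length 2 ending in leaves. Suppose that no edge meeting a copy is doubled.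

* At a pendant path, the leaf forces both edges to have the same color, so the middle vertex has
  weighted degree 2 and the fork must not have weighted degree 2 in that color. With two such paths
  this makes the fork monochromatic, of weighted degree 3.
* On the triangle, the two vertices of degree 2 must be told apart, so the root sends edges of
  different colors to them. Comparing the root with both of them leaves only the possibility that
  the root has weighted degree 3 in the color of its edge to the fork.

Hence the edge from the root to the fork joins equal weighted degrees. So every copy meets a doubled
edge, and no edge meets two copies.
-/

/-- No edge at `v` is doubled. -/
def Undoubled {V : Type*} (D : Finset (Sym2 V)) (v : V) : Prop :=
  ∀ e ∈ D, v ∉ e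

section Coloring

variable {V : Type*} [Fintype V] {G : SimpleGraph V} {D : Finset (Sym2 V)}
  {c : Sym2 V → Fin 2} {i j : Fin 2} {u v w x y : V}

lemma card_le_wdeg : #{w | G.Adj v w ∧ c s(v, w) = i} ≤ wdeg G D c i v := by
  rw [wdeg, card_eq_sum_ones]
  gcongr
  split_ifs <;> simp

lemma wdeg_pos (hw : G.Adj v w) : 0 < wdeg G D c (c s(v, w)) v :=
  (card_pos.2 ⟨w, by simp [hw]⟩).trans_le card_le_wdeg

lemma one_lt_wdeg (hu : G.Adj v u) (hw : G.Adj v w) (huw : u ≠ w)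
    (hc : c s(v, u) = c s(v, w)) : 1 < wdeg G D c (c s(v, w)) v :=
  (one_lt_card.2 ⟨u, by simp [hu, hc], w, by simp [hw], huw⟩).trans_le card_le_wdeg

lemma Undoubled.wdeg_eq_card (hv : Undoubled D v) :
    wdeg G D c i v = #{w | G.Adj v w ∧ c s(v, w) = i} := by
  have hvD (w : V) : s(v, w) ∉ D := fun hw => hv _ hw (Sym2.mem_mk_left v w)
  simp [wdeg, hvD]

lemma Undoubled.wdeg_add_wdeg (hv : Undoubled D v) (hij : i ≠ j) :
    wdeg G D c i v + wdeg G D c j v = G.degree v := by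
  have hj (k : Fin 2) : k = j ↔ ¬k = i := by omega
  simp_rw [hv.wdeg_eq_card, hj, ← filter_filter, card_filter_add_card_filter_not,
    ← G.card_neighborFinset_eq_degree, G.neighborFinset_eq_filter]

lemma Undoubled.color_eq_of_wdeg_eq_degree (hv : Undoubled D v)
    (hdeg : wdeg G D c i v = G.degree v) (hw : G.Adj v w) : c s(v, w) = i := by
  by_contra hne
  have hsum := hv.wdeg_add_wdeg (G := G) (c := c) hne
  have hpos : 0 < wdeg G D c (c s(v, w)) v := wdeg_pos hw
  omega

lemma Undoubled.wdeg_le_degree (hv : Undoubled D v) : wdeg G D c i v ≤ G.degree v := by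
  obtain ⟨j, hij⟩ := exists_ne i
  have hsum := hv.wdeg_add_wdeg (G := G) (c := c) hij
  omega

lemma Undoubled.wdeg_eq_three_of_wdeg_ne_two (hy : Undoubled D y) (hdeg : G.degree y = 3)
    (hu : G.Adj y u) (hw : G.Adj y w) (huw : u ≠ w) (hu2 : wdeg G D c (c s(y, u)) y ≠ 2)
    (hw2 : wdeg G D c (c s(y, w)) y ≠ 2) (hx : G.Adj y x) :
    wdeg G D c (c s(y, x)) y = 3 := by
  have hupos : 0 < wdeg G D c (c s(y, u)) y := wdeg_pos hu
  have hwpos : 0 < wdeg G D c (c s(y, w)) y := wdeg_pos hw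
  have huw_color : c s(y, u) = c s(y, w) := by
    by_contra hne
    have hsum := hy.wdeg_add_wdeg (G := G) (c := c) hne
    omega
  have hmono : wdeg G D c (c s(y, w)) y = G.degree y := by
    have hgt : 1 < wdeg G D c (c s(y, w)) y := one_lt_wdeg hu hw huw huw_color
    have hle : wdeg G D c (c s(y, w)) y ≤ G.degree y := hy.wdeg_le_degree
    omega
  rw [hy.color_eq_of_wdeg_eq_degree hmono hx, hmono, hdeg]

lemma ValidDC.wdeg_ne_two_of_pendant_path (hv : ValidDC G D c) (hyu : G.Adj y u)
    (huw : G.Adj u w) (hu : Undoubled D u) (hw : Undoubled D w) (hudeg : G.degree u = 2)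
    (hwdeg : G.degree w = 1) : wdeg G D c (c s(y, u)) y ≠ 2 := by
  have hleaf : wdeg G D c (c s(u, w)) w = 1 := by
    have hpos : 0 < wdeg G D c (c s(w, u)) w := wdeg_pos huw.symm
    have hle : wdeg G D c (c s(w, u)) w ≤ G.degree w := hw.wdeg_le_degree
    rw [Sym2.eq_swap]
    omega
  have hmid : wdeg G D c (c s(u, w)) u = G.degree u := by
    have hpos : 0 < wdeg G D c (c s(u, w)) u := wdeg_pos huw
    have hle : wdeg G D c (c s(u, w)) u ≤ G.degree u := hu.wdeg_le_degree
    have hne := hv.2 u w huw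
    omega
  have hcolor : c s(y, u) = c s(u, w) := by
    rw [Sym2.eq_swap, hu.color_eq_of_wdeg_eq_degree hmid hyu.symm]
  have hne := hv.2 y u hyu
  rwa [hcolor, hmid, hudeg, ← hcolor] at hne

lemma Undoubled.wdeg_eq_ite_of_degree_eq_two (hu : Undoubled D u) (hdeg : G.degree u = 2)
    (hx : G.Adj u x) (hw : G.Adj u w) (hxw : x ≠ w) :
    wdeg G D c (c s(u, w)) u = if c s(u, x) = c s(u, w) then 2 else 1 := by
  have hwpos : 0 < wdeg G D c (c s(u, w)) u := wdeg_pos hw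
  split_ifs with hcolor
  · have hgt : 1 < wdeg G D c (c s(u, w)) u := one_lt_wdeg hx hw hxw hcolor
    have hle : wdeg G D c (c s(u, w)) u ≤ G.degree u := hu.wdeg_le_degree
    omega
  · have hxpos : 0 < wdeg G D c (c s(u, x)) u := wdeg_pos hx
    have hsum := hu.wdeg_add_wdeg (G := G) (c := c) hcolor
    omega

lemma ValidDC.color_ne_of_triangle (hv : ValidDC G D c) (hxu : G.Adj x u) (hxw : G.Adj x w)
    (huw : G.Adj u w) (hu : Undoubled D u) (hw : Undoubled D w) (hudeg : G.degree u = 2)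
    (hwdeg : G.degree w = 2) : c s(x, u) ≠ c s(x, w) := by
  intro hcolor
  have hdeg_u := hu.wdeg_eq_ite_of_degree_eq_two (c := c) hudeg hxu.symm huw hxw.ne
  have hdeg_w := hw.wdeg_eq_ite_of_degree_eq_two (c := c) hwdeg hxw.symm huw.symm hxu.ne
  rw [Sym2.eq_swap (a := w) (b := u), Sym2.eq_swap (a := w) (b := x), ← hcolor,
    Sym2.eq_swap (a := x) (b := u)] at hdeg_w
  exact hv.2 u w huw (hdeg_u.trans hdeg_w.symm)

lemma ValidDC.wdeg_eq_three_of_triangle_of_color_eq (hv : ValidDC G D c) (hxu : G.Adj x u)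
    (hxw : G.Adj x w) (huw : G.Adj u w) (hx : Undoubled D x) (hu : Undoubled D u)
    (hw : Undoubled D w) (hxdeg : G.degree x = 4) (hudeg : G.degree u = 2)
    (hwdeg : G.degree w = 2) (hcolor : c s(x, u) = c s(u, w)) (hxy : G.Adj x y) (hyu : y ≠ u) :
    wdeg G D c (c s(x, y)) x = 3 := by
  have hne : c s(x, u) ≠ c s(x, w) := hv.color_ne_of_triangle hxu hxw huw hu hw hudeg hwdeg
  have hu_two : wdeg G D c (c s(x, u)) u = 2 := by
    have h := hu.wdeg_eq_ite_of_degree_eq_two (c := c) hudeg huw hxu.symm hxw.ne'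
    rwa [Sym2.eq_swap (a := u) (b := x), if_pos hcolor.symm] at h
  have hw_one : wdeg G D c (c s(x, w)) w = 1 := by
    have h := hw.wdeg_eq_ite_of_degree_eq_two (c := c) hwdeg huw.symm hxw.symm hxu.ne'
    rwa [Sym2.eq_swap (a := w) (b := u), Sym2.eq_swap (a := w) (b := x), ← hcolor,
      if_neg hne] at h
  have hx_ne_two : wdeg G D c (c s(x, u)) x ≠ 2 := hu_two ▸ hv.2 x u hxu
  have hx_ne_one : wdeg G D c (c s(x, w)) x ≠ 1 := hw_one ▸ hv.2 x w hxw
  have hsum : wdeg G D c (c s(x, u)) x + wdeg G D c (c s(x, w)) x = 4 :=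
    hxdeg ▸ hx.wdeg_add_wdeg hne
  have hupos : 0 < wdeg G D c (c s(x, u)) x := wdeg_pos hxu
  have hwpos : 0 < wdeg G D c (c s(x, w)) x := wdeg_pos hxw
  have hy_ne : c s(x, y) ≠ c s(x, u) := by
    intro hy
    have hgt : 1 < wdeg G D c (c s(x, u)) x := one_lt_wdeg hxy hxu hyu hy
    omega
  have hy_eq : c s(x, y) = c s(x, w) := by omega
  rw [hy_eq]
  omega

lemma ValidDC.wdeg_eq_three_of_triangle (hv : ValidDC G D c) (hxu : G.Adj x u)
    (hxw : G.Adj x w) (huw : G.Adj u w) (hx : Undoubled D x) (hu : Undoubled D u)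
    (hw : Undoubled D w) (hxdeg : G.degree x = 4) (hudeg : G.degree u = 2)
    (hwdeg : G.degree w = 2) (hxy : G.Adj x y) (hyu : y ≠ u) (hyw : y ≠ w) :
    wdeg G D c (c s(x, y)) x = 3 := by
  have hne : c s(x, u) ≠ c s(x, w) := hv.color_ne_of_triangle hxu hxw huw hu hw hudeg hwdeg
  obtain hcolor | hcolor : c s(x, u) = c s(u, w) ∨ c s(x, w) = c s(u, w) := by omega
  · exact hv.wdeg_eq_three_of_triangle_of_color_eq hxu hxw huw hx hu hw hxdeg hudeg hwdeg hcolor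
      hxy hyu
  · rw [Sym2.eq_swap (a := u)] at hcolor
    exact hv.wdeg_eq_three_of_triangle_of_color_eq hxw hxu huw.symm hx hw hu hxdeg hwdeg hudeg
      hcolor hxy hyw

end Coloring

section Attachment

variable {V V' W : Type*} {G : SimpleGraph V} {G' : SimpleGraph V'} {H : SimpleGraph W}
  [G.LocallyFinite] [G'.LocallyFinite] [H.LocallyFinite]

/-- The copy `f` of `H` in `G` is joined to the rest of `G` by exactly one edge, which is incident
to `f r`. This is encoded by degrees: only `f r` has a neighbor in `G` not coming from `H`, and only
one. -/
def IsAttachedAt (f : H.Copy G) (r : W) : Prop :=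
  ∀ w, G.degree (f w) = H.degree w + if w = r then 1 else 0

lemma IsAttachedAt.iso_comp {f : H.Copy G} {r : W} (hf : IsAttachedAt f r) (e : G ≃g G') :
    IsAttachedAt (e.toCopy.comp f) r :=
  fun w => (e.degree_eq (f w)).trans (hf w)

end Attachment

section HubGraph

variable {ι W : Type*} {H : SimpleGraph W} {r : W}

/-- The graph obtained from disjoint copies of `H` indexed by `ι` by adding one vertex, `none`,
and joining it to the vertex `r` of every copy. -/
def hubGraph (ι : Type*) (H : SimpleGraph W) (r : W) : SimpleGraph (Option (ι × W)) where
  Adj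
    | none, none => False
    | none, some (_, w) | some (_, w), none => w = r
    | some (i, v), some (j, w) => i = j ∧ H.Adj v w
  symm := ⟨by
    rintro (_ | ⟨i, v⟩) (_ | ⟨j, w⟩) h
    exacts [h, h, h, ⟨h.1.symm, h.2.symm⟩]⟩
  loopless := ⟨by
    rintro (_ | ⟨i, v⟩) h
    exacts [h, H.irrefl h.2]⟩

/-- The copy of `H` indexed by `i` in `hubGraph ι H r`. -/
def hubCopy (H : SimpleGraph W) (r : W) (i : ι) : H.Copy (hubGraph ι H r) where
  toHom := ⟨fun w => some (i, w), fun h => ⟨rfl, h⟩⟩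
  injective' _ _ h := congrArg Prod.snd (Option.some.inj h)

@[simp]
lemma hubGraph_adj_some_none {p : ι × W} : (hubGraph ι H r).Adj (some p) none ↔ p.2 = r :=
  Iff.rfl

@[simp]
lemma hubGraph_adj_some_some {p q : ι × W} :
    (hubGraph ι H r).Adj (some p) (some q) ↔ p.1 = q.1 ∧ H.Adj p.2 q.2 :=
  Iff.rfl

@[simp]
lemma hubCopy_apply (i : ι) (w : W) : hubCopy H r i w = some (i, w) := rfl

lemma hubGraph_connected (hH : H.Preconnected) : (hubGraph ι H r).Connected := by
  refine SimpleGraph.connected_iff_exists_forall_reachable _ |>.2 ⟨none, ?_⟩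
  rintro (_ | ⟨i, w⟩)
  · rfl
  · have hroot : (hubGraph ι H r).Adj none (some (i, r)) := rfl
    exact hroot.reachable.trans ((hH r w).map (hubCopy H r i).toHom)

lemma isAttachedAt_hubCopy [H.LocallyFinite] [(hubGraph ι H r).LocallyFinite] (i : ι) :
    IsAttachedAt (hubCopy H r i) r := by
  intro w
  let S : Finset (Option (ι × W)) := (H.neighborFinset w).map (hubCopy H r i).toEmbedding
  have hnone : none ∉ S := by simp [S, SimpleGraph.Copy.toEmbedding]
  have hnbr : (hubGraph ι H r).neighborFinset (some (i, w)) =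
      if w = r then insert none S else S := by
    ext (_ | ⟨j, v⟩) <;> by_cases hw : w = r <;>
      simp [S, hw, SimpleGraph.Copy.toEmbedding, and_comm]
  change (hubGraph ι H r).degree (some (i, w)) = _
  rw [← SimpleGraph.card_neighborFinset_eq_degree, hnbr, apply_ite card,
    card_insert_of_notMem hnone, card_map, SimpleGraph.card_neighborFinset_eq_degree]
  split_ifs <;> rfl

end HubGraph

/-- The vertices of `gadget`: `root` spans a triangle with the two vertices `tri s` and is joined
to `fork`, from which the two paths `fork - mid s - leaf s` hang. -/
inductive GadgetVertex
  | root
  | fork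
  | tri (s : Bool)
  | mid (s : Bool)
  | leaf (s : Bool)
  deriving DecidableEq, Fintype

open GadgetVertex

/-- The edges of `gadget`, each in one orientation, except that `tri s` is also related to itself
and to `tri !s` in both orientations. -/
def gadgetEdge : GadgetVertex → GadgetVertex → Bool
  | root, fork | root, tri _ | tri _, tri _ | fork, mid _ => true
  | mid s, leaf t => s == t
  | _, _ => false

/-- The graph described at `GadgetVertex`; many disjoint copies of it make `D_lir` large. -/
def gadget : SimpleGraph GadgetVertex :=
  .fromRel fun v w => gadgetEdge v w

instance : DecidableRel gadget.Adj :=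
  inferInstanceAs (DecidableRel (SimpleGraph.fromRel fun v w => gadgetEdge v w).Adj)

lemma gadget_degree (v : GadgetVertex) : gadget.degree v =
    match v with
    | root | fork => 3
    | tri _ | mid _ => 2
    | leaf _ => 1 := by
  decide +revert

lemma gadget_connected : gadget.Connected := by
  have hfork : gadget.Adj root fork := by decide
  have htri (s : Bool) : gadget.Adj root (tri s) := by decide +revert
  have hmid (s : Bool) : gadget.Adj fork (mid s) := by decide +revert
  have hleaf (s : Bool) : gadget.Adj (mid s) (leaf s) := by decide +revert
  refine SimpleGraph.connected_iff_exists_forall_reachable _ |>.2 ⟨root, ?_⟩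
  rintro (_ | _ | s | s | s)
  · rfl
  · exact hfork.reachable
  · exact (htri s).reachable
  · exact hfork.reachable.trans (hmid s).reachable
  · exact (hfork.reachable.trans (hmid s).reachable).trans (hleaf s).reachable

section LowerBound

variable {V : Type*} [Fintype V] {G : SimpleGraph V} {D : Finset (Sym2 V)} {c : Sym2 V → Fin 2}

theorem ValidDC.exists_doubled_of_gadget (hv : ValidDC G D c) {f : gadget.Copy G}
    (hf : IsAttachedAt f root) : ∃ e ∈ D, ∃ v, f v ∈ e := by
  by_contra! hD
  have hundoubled (v : GadgetVertex) : Undoubled D (f v) := fun e he => hD e he v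
  have hadj {v w : GadgetVertex} (h : gadget.Adj v w) : G.Adj (f v) (f w) := f.toHom.map_adj h
  have hpath (s : Bool) : wdeg G D c (c s(f fork, f (mid s))) (f fork) ≠ 2 :=
    hv.wdeg_ne_two_of_pendant_path (hadj (by decide +revert))
      (hadj (v := mid s) (w := leaf s) (by decide +revert))
      (hundoubled _) (hundoubled _) (by simp [hf _, gadget_degree]) (by simp [hf _, gadget_degree])
  have hfork : wdeg G D c (c s(f fork, f root)) (f fork) = 3 :=
    (hundoubled fork).wdeg_eq_three_of_wdeg_ne_two (by simp [hf _, gadget_degree])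
      (hadj (by decide)) (hadj (by decide)) (f.injective.ne (by decide))
      (hpath false) (hpath true) (hadj (by decide))
  have hroot : wdeg G D c (c s(f root, f fork)) (f root) = 3 :=
    hv.wdeg_eq_three_of_triangle (u := f (tri false)) (w := f (tri true))
      (hadj (by decide)) (hadj (by decide)) (hadj (by decide))
      (hundoubled _) (hundoubled _) (hundoubled _)
      (by simp [hf _, gadget_degree]) (by simp [hf _, gadget_degree])
      (by simp [hf _, gadget_degree]) (hadj (by decide))
      (f.injective.ne (by decide)) (f.injective.ne (by decide))
  rw [Sym2.eq_swap] at hfork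
  exact hv.2 (f root) (f fork) (hadj (by decide)) (hroot.trans hfork.symm)

theorem ValidDC.card_le_card_of_gadgets {ι : Type*} [Fintype ι] (hv : ValidDC G D c)
    (f : ι → gadget.Copy G) (hf : ∀ i, IsAttachedAt (f i) root)
    (hne : ∀ i j, i ≠ j → ∀ v w, f i v ≠ f j w)
    (hadj : ∀ i j, i ≠ j → ∀ v w, ¬G.Adj (f i v) (f j w)) :
    Fintype.card ι ≤ #D := by
  refine card_le_card_of_forall_subsingleton (s := univ) (fun i e => ∃ v, f i v ∈ e)
    (fun i _ => hv.exists_doubled_of_gadget (hf i)) ?_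
  rintro e he i ⟨-, v, hve⟩ j ⟨-, w, hwe⟩
  by_contra hij
  have hedge : e = s(f i v, f j w) := (Sym2.mem_and_mem_iff (hne i j hij v w)).1 ⟨hve, hwe⟩
  exact hadj i j hij v w (hv.1 (hedge ▸ he))

end LowerBound

/-- `D_lir` is not bounded by any constant over connected graphs: for every `k` there
is a connected graph every valid doubling-coloring of which doubles at least `k` edges. -/
theorem Dlir_unbounded (k : ℕ) :
    ∃ (n : ℕ) (G : SimpleGraph (Fin n)), G.Connected ∧
      ∀ (D : Finset (Sym2 (Fin n))) (c : Sym2 (Fin n) → Fin 2),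
        ValidDC G D c → k ≤ D.card := by
  let Γ := hubGraph (Fin k) gadget root
  let e : Γ ≃g Γ.overFin rfl := Γ.overFinIso rfl
  refine ⟨_, Γ.overFin rfl, e.connected_iff.1 (hubGraph_connected gadget_connected.preconnected),
    fun D c hv => ?_⟩
  have hcard : Fintype.card (Fin k) ≤ #D :=
    hv.card_le_card_of_gadgets (fun i => e.toCopy.comp (hubCopy gadget root i))
      (fun i => (isAttachedAt_hubCopy i).iso_comp e)
      (fun i j hij v w h => hij (congrArg Prod.fst (Option.some.inj (e.injective h))))
      (fun i j hij v w h => hij (e.map_adj_iff.1 h).1)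
  rwa [Fintype.card_fin] at hcard
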